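/- Let 0 < α < ρ_c^0 and ρ*(α) < β < 1 with β ≠ 1 − ρ*(α), where ρ*(α) := (1/2)(1 − √(1 − 4α(1−α)k(0)/k(1))) (the low-density parameter regions G_1 and G_2). Then for every δ > 0 and every x ∈ (0,1) there exists ε_0 > 0 such that for every ε ∈ (0, ε_0) and every twice continuously differentiable ρ : [0,1] → ℝ solving the stationary boundary value problem one has |ρ(0) − α| < δ, |ρ(x) − (1/2)(1 − √(1 − 4α(1−α)k(0)/k(x)))| < δ, and |ρ(1) − α(1−α)k(0)/(β k(1))| < δ; i.e., as ε → 0 the solution converges to the low-density reduced orbit starting at ρ = α, with a boundary layer only at the exit x = 1. -/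

import Mathlib

open Set

/-- The total flux `j(x) = -ε ρ'(x) + ρ(x)(1-ρ(x))` of a density profile `ρ` on `[0,1]`. -/
noncomputable def flux (ε : ℝ) (ρ : ℝ → ℝ) (x : ℝ) : ℝ :=
  -ε * derivWithin ρ (Icc (0:ℝ) 1) x + ρ x * (1 - ρ x)

/-- `ρ` is a (twice continuously differentiable) solution of the stationary boundary value
problem: `(k j)' = 0` on `[0,1]`, `j(0) = α(1-ρ(0))`, `j(1) = β ρ(1)`. -/
def IsStatSol (k : ℝ → ℝ) (ε α β : ℝ) (ρ : ℝ → ℝ) : Prop :=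
  ContDiffOn ℝ 2 ρ (Icc (0:ℝ) 1) ∧
  (∀ x ∈ Icc (0:ℝ) 1, derivWithin (fun y => k y * flux ε ρ y) (Icc (0:ℝ) 1) x = 0) ∧
  flux ε ρ 0 = α * (1 - ρ 0) ∧
  flux ε ρ 1 = β * ρ 1

/-- `ρ_c^0 = (1/2)(1 - √(1 - k(ξ*)/k(0)))`. -/
noncomputable def rhoC0 (k : ℝ → ℝ) (ξs : ℝ) : ℝ :=
  1/2 * (1 - Real.sqrt (1 - k ξs / k 0))

/-- `ρ*(α) = (1/2)(1 - √(1 - 4α(1-α)k(0)/k(1)))`. -/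
noncomputable def rhoStar (k : ℝ → ℝ) (α : ℝ) : ℝ :=
  1/2 * (1 - Real.sqrt (1 - 4*α*(1-α) * k 0 / k 1))

/-!
Along a solution the weighted flux `J = k j` is constant, so `ε ρ' = ρ (1 - ρ) - J / k`, and the
boundary conditions read `J = k(0) α (1 - ρ(0)) = k(1) β ρ(1)`. Suppose that `J` stays below a level
`K` which is smaller than the capacities of the bulk and of the exit. If `ρ(x) ≥ u` while
`K < u (1 - u) k(x)`, then for small `ε` the profile climbs to `1 - u ≥ 1/2` at once, cannot come
back below `1/2`, and so leaves the interval with a flux larger than `K`. If `ρ(x) ≤ u < 1/2` while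
`u (1 - u) k(x) < J`, the profile drops to `0`, although solutions with `α, β > 0` are positive. At
`x = 0` with `u = α` this forces `J → α (1 - α) k(0)`, because `J` decreases as `ρ(0)` grows; at the
other points it then gives the profile.
-/

open Filter Topology

section OrderTopology

variable {X : Type*} [LinearOrder X] [TopologicalSpace X] [OrderTopology X] [DenselyOrdered X]
  {a b x : X} {p : X → Prop}

lemma exists_forall_Icc_right (hx : x ∈ Ico a b) (h : ∀ᶠ t in 𝓝[Icc a b] x, p t) :
    ∃ c ∈ Ioo x b, ∀ t ∈ Icc x c, p t := by
  have h' : ∀ᶠ t in 𝓝[≥] x, p t := by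
    rw [← nhdsWithin_Icc_eq_nhdsGE hx.2]
    exact h.filter_mono (nhdsWithin_mono x (Icc_subset_Icc_left hx.1))
  obtain ⟨u, ⟨hxu, hub⟩, hu⟩ := (mem_nhdsGE_iff_exists_mem_Ioc_Ico_subset hx.2).1 h'
  obtain ⟨c, hxc, hcu⟩ := exists_between hxu
  exact ⟨c, ⟨hxc, hcu.trans_le hub⟩, fun t ht => hu ⟨ht.1, ht.2.trans_lt hcu⟩⟩

lemma exists_forall_Icc_left (hx : x ∈ Ioc a b) (h : ∀ᶠ t in 𝓝[Icc a b] x, p t) :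
    ∃ c ∈ Ioo a x, ∀ t ∈ Icc c x, p t := by
  have h' : ∀ᶠ t in 𝓝[≤] x, p t := by
    rw [← nhdsWithin_Icc_eq_nhdsLE hx.1]
    exact h.filter_mono (nhdsWithin_mono x (Icc_subset_Icc_right hx.2))
  obtain ⟨l, ⟨hal, hlx⟩, hl⟩ := (mem_nhdsLE_iff_exists_mem_Ico_Ioc_subset hx.1).1 h'
  obtain ⟨c, hlc, hcx⟩ := exists_between hlx
  exact ⟨c, ⟨hal.trans_lt hlc, hcx⟩, fun t ht => hl ⟨hlc.trans_le ht.1, ht.2⟩⟩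

end OrderTopology

section AffineBarrier

variable {f : ℝ → ℝ → ℝ} {y : ℝ → ℝ} {a c p q : ℝ}

-- The chord from `(a, p)` to `(c, q)` is a strict subsolution.
lemma le_of_slope_lt (hac : a < c) (hpq : p ≤ q)
    (hy : ∀ t ∈ Icc a c, HasDerivWithinAt y (f t (y t)) (Icc a c) t)
    (hf : ∀ t ∈ Icc a c, ∀ v ∈ Icc p q, (q - p) / (c - a) < f t v) (hp : p ≤ y a) :
    q ≤ y c := by
  set s := (q - p) / (c - a)
  have hs : 0 ≤ s := div_nonneg (by linarith) (by linarith)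
  have hsc : s * (c - a) = q - p := div_mul_cancel₀ _ (by linarith)
  have chord_deriv (t : ℝ) : HasDerivWithinAt (fun t => p + s * (t - a)) s (Ici t) t := by
    simpa using ((((hasDerivAt_id t).sub_const a).const_mul s).const_add p).hasDerivWithinAt
  have chord_le : p + s * (c - a) ≤ y c := by
    refine image_le_of_deriv_right_lt_deriv_boundary' (f := fun t => p + s * (t - a))
      (B' := fun t => f t (y t)) (by fun_prop) (fun t _ => chord_deriv t) (by simpa using hp)
      (fun t ht => (hy t ht).continuousWithinAt) (fun t ht => ?_) (fun t ht hty => ?_)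
      (right_mem_Icc.2 hac.le)
    · exact ((hy t ⟨ht.1, ht.2.le⟩).mono (Icc_subset_Icc_left ht.1)).mono_of_mem_nhdsWithin
        (Icc_mem_nhdsGE ht.2)
    · have h_start : 0 ≤ s * (t - a) := mul_nonneg hs (by linarith [ht.1])
      have h_end : s * (t - a) ≤ s * (c - a) := mul_le_mul_of_nonneg_left (by linarith [ht.2]) hs
      exact hf t ⟨ht.1, ht.2.le⟩ (y t) ⟨by linarith, by linarith⟩
  linarith

lemma le_of_lt_neg_slope (hac : a < c) (hpq : p ≤ q)
    (hy : ∀ t ∈ Icc a c, HasDerivWithinAt y (f t (y t)) (Icc a c) t)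
    (hf : ∀ t ∈ Icc a c, ∀ v ∈ Icc p q, f t v < -((q - p) / (c - a))) (hq : y a ≤ q) :
    y c ≤ p := by
  refine neg_le_neg_iff.1 (le_of_slope_lt (f := fun t v => -f t (-v)) (y := fun t => -y t) hac
    (neg_le_neg hpq) (fun t ht => by simpa using (hy t ht).fun_neg) (fun t ht v hv => ?_)
    (neg_le_neg hq))
  rw [neg_sub_neg, lt_neg]
  exact hf t ht (-v) ⟨le_neg.2 hv.2, neg_le.2 hv.1⟩

end AffineBarrier

section LowDensity

lemma strictMonoOn_mul_one_sub : StrictMonoOn (fun v : ℝ => v * (1 - v)) (Iic (1 / 2)) := by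
  intro u hu v hv huv
  simp only [mem_Iic] at hu hv
  nlinarith

lemma mul_one_sub_le_of_mem_Icc {u v : ℝ} (hv : v ∈ Icc u (1 - u)) :
    u * (1 - u) ≤ v * (1 - v) := by
  nlinarith [mul_nonneg (sub_nonneg.2 hv.1) (sub_nonneg.2 hv.2)]

/-- The low-density root `r ≤ 1/2` of `r (1 - r) = q`, meaningful for `q ≤ 1/4`; the reduced orbit
carrying the weighted flux `J` is `x ↦ lowDensity (J / k x)`. -/
noncomputable def lowDensity (q : ℝ) : ℝ :=
  1 / 2 * (1 - Real.sqrt (1 - 4 * q))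

variable {q u : ℝ}

lemma lowDensity_le_half (q : ℝ) : lowDensity q ≤ 1 / 2 := by
  unfold lowDensity
  linarith [Real.sqrt_nonneg (1 - 4 * q)]

lemma lowDensity_mul_one_sub (hq : q ≤ 1 / 4) : lowDensity q * (1 - lowDensity q) = q := by
  unfold lowDensity
  linarith [Real.sq_sqrt (show 0 ≤ 1 - 4 * q by linarith)]

lemma lowDensity_pos (hq : 0 < q) : 0 < lowDensity q := by
  have : Real.sqrt (1 - 4 * q) < 1 := (Real.sqrt_lt' one_pos).2 (by linarith)
  unfold lowDensity
  linarith

lemma lowDensity_lt_half (hq : q < 1 / 4) : lowDensity q < 1 / 2 := by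
  have : 0 < Real.sqrt (1 - 4 * q) := Real.sqrt_pos.2 (by linarith)
  unfold lowDensity
  linarith

lemma lt_lowDensity_iff (hq : q ≤ 1 / 4) (hu : u ≤ 1 / 2) :
    u < lowDensity q ↔ u * (1 - u) < q := by
  rw [← strictMonoOn_mul_one_sub.lt_iff_lt hu (lowDensity_le_half q)]
  simp only [lowDensity_mul_one_sub hq]

lemma lowDensity_lt_iff (hq : q ≤ 1 / 4) (hu : u ≤ 1 / 2) :
    lowDensity q < u ↔ q < u * (1 - u) := by
  rw [← strictMonoOn_mul_one_sub.lt_iff_lt (lowDensity_le_half q) hu]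
  simp only [lowDensity_mul_one_sub hq]

end LowDensity

/-- The weighted flux `k(0) j(0)` of a solution, as prescribed by the entrance condition. -/
def inflow (k : ℝ → ℝ) (α : ℝ) (ρ : ℝ → ℝ) : ℝ :=
  k 0 * (α * (1 - ρ 0))

lemma inflow_eq (k : ℝ → ℝ) (α : ℝ) (ρ : ℝ → ℝ) :
    inflow k α ρ = α * (1 - α) * k 0 - k 0 * α * (ρ 0 - α) := by
  rw [inflow]
  ring

/-- The weighted flux `K` is below the capacity `k/4` of the bulk and below that of an exit of rate
`β`, which is `β (1 - β) k(1)` for `β ≤ 1/2` and `k(1)/4` for faster exits. -/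
structure IsSubcritical (k : ℝ → ℝ) (β K : ℝ) : Prop where
  lt_bulk : ∀ t ∈ Icc (0 : ℝ) 1, K < k t / 4
  lt_exit : K < min β (1 / 2) * (1 - min β (1 / 2)) * k 1

/-- The filter `ε → 0⁺` on the pairs `(ε, ρ)` in which `ρ` solves the stationary boundary value
problem; limits along it are limits uniform over all solutions. -/
def vanishingViscosity (k : ℝ → ℝ) (α β : ℝ) : Filter (ℝ × (ℝ → ℝ)) :=
  comap Prod.fst (𝓝[>] 0) ⊓ 𝓟 {s | IsStatSol k s.1 α β s.2}

variable {k : ℝ → ℝ} {α β : ℝ}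

section VanishingViscosity

lemma tendsto_fst_vanishingViscosity :
    Tendsto Prod.fst (vanishingViscosity k α β) (𝓝[>] 0) :=
  tendsto_comap.mono_left inf_le_left

lemma eventually_isStatSol :
    ∀ᶠ s in vanishingViscosity k α β, 0 < s.1 ∧ IsStatSol k s.1 α β s.2 :=
  (tendsto_fst_vanishingViscosity.eventually self_mem_nhdsWithin).and
    (mem_inf_of_right (mem_principal_self _))

lemma eventually_mul_fst_lt (r : ℝ) {m : ℝ} (hm : 0 < m) :
    ∀ᶠ s in vanishingViscosity k α β, r * s.1 < m := by
  have h : Tendsto (fun s => r * s.1) (vanishingViscosity k α β) (𝓝 (r * 0)) :=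
    (tendsto_fst_vanishingViscosity.mono_right nhdsWithin_le_nhds).const_mul r
  exact h.eventually_lt_const (by simpa using hm)

lemma eventually_vanishingViscosity_iff {P : ℝ × (ℝ → ℝ) → Prop} :
    (∀ᶠ s in vanishingViscosity k α β, P s) ↔
      ∃ ε₀ > 0, ∀ ε, 0 < ε → ε < ε₀ → ∀ ρ, IsStatSol k ε α β ρ → P (ε, ρ) := by
  rw [vanishingViscosity, eventually_inf_principal, eventually_comap]
  refine mem_nhdsGT_iff_exists_Ioo_subset.trans ?_
  refine exists_congr fun ε₀ => and_congr_right fun _ => ⟨?_, ?_⟩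
  · exact fun h ε hε hε₀ ρ hρ => h ⟨hε, hε₀⟩ (ε, ρ) rfl hρ
  · rintro h _ hε ⟨ε, ρ⟩ rfl hρ
    exact h ε hε.1 hε.2 ρ hρ

end VanishingViscosity

section FirstOrder

variable {ε : ℝ} {ρ : ℝ → ℝ}

lemma IsStatSol.mul_flux_eq_inflow (h : IsStatSol k ε α β ρ)
    (hk : DifferentiableOn ℝ k (Icc 0 1)) {t : ℝ} (ht : t ∈ Icc (0 : ℝ) 1) :
    k t * flux ε ρ t = inflow k α ρ := by
  obtain ⟨hρ, hder, h_entrance, -⟩ := h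
  have hρ₁ : DifferentiableOn ℝ ρ (Icc 0 1) := hρ.differentiableOn (by norm_num)
  have hρ₂ : DifferentiableOn ℝ (derivWithin ρ (Icc 0 1)) (Icc 0 1) :=
    (hρ.derivWithin (m := 1) (uniqueDiffOn_Icc zero_lt_one) (by norm_num)).differentiableOn
      (by norm_num)
  have h_diff : DifferentiableOn ℝ (fun t => k t * flux ε ρ t) (Icc 0 1) := by
    unfold flux
    fun_prop
  rw [inflow, ← h_entrance]
  exact constant_of_derivWithin_zero h_diff (fun t ht => hder t ⟨ht.1, ht.2.le⟩) t ht

lemma IsStatSol.inflow_eq_outflow (h : IsStatSol k ε α β ρ)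
    (hk : DifferentiableOn ℝ k (Icc 0 1)) : inflow k α ρ = k 1 * (β * ρ 1) := by
  rw [← h.mul_flux_eq_inflow hk (right_mem_Icc.2 zero_le_one), h.2.2.2]

lemma IsStatSol.hasDerivWithinAt (h : IsStatSol k ε α β ρ)
    (hk : DifferentiableOn ℝ k (Icc 0 1)) (hkpos : ∀ t ∈ Icc (0 : ℝ) 1, 0 < k t) (hε : 0 < ε)
    {a c : ℝ} (ha : 0 ≤ a) (hc : c ≤ 1) {t : ℝ} (ht : t ∈ Icc a c) :
    HasDerivWithinAt ρ ((ρ t * (1 - ρ t) - inflow k α ρ / k t) / ε) (Icc a c) t := by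
  have hsub : Icc a c ⊆ Icc 0 1 := Icc_subset_Icc ha hc
  have h_deriv := (h.1.differentiableOn (by norm_num) t (hsub ht)).hasDerivWithinAt
  have h_eq : (ρ t * (1 - ρ t) - inflow k α ρ / k t) / ε = derivWithin ρ (Icc 0 1) t := by
    rw [← h.mul_flux_eq_inflow hk (hsub ht), mul_div_cancel_left₀ _ (hkpos t (hsub ht)).ne',
      div_eq_iff hε.ne', flux]
    ring
  exact h_eq ▸ h_deriv.mono hsub

end FirstOrder

section Barriers

variable {a c K u : ℝ}

lemma eventually_one_sub_le (hk : DifferentiableOn ℝ k (Icc 0 1))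
    (hkpos : ∀ t ∈ Icc (0 : ℝ) 1, 0 < k t) (ha : 0 ≤ a) (hac : a < c) (hc : c ≤ 1)
    (hu : u ≤ 1 / 2) (hK : ∀ t ∈ Icc a c, K < u * (1 - u) * k t) :
    ∀ᶠ s in vanishingViscosity k α β, inflow k α s.2 ≤ K → u ≤ s.2 a → 1 - u ≤ s.2 c := by
  have hsub : Icc a c ⊆ Icc 0 1 := Icc_subset_Icc ha hc
  have h_cont : ContinuousOn (fun t => u * (1 - u) - K / k t) (Icc a c) :=
    continuousOn_const.sub (continuousOn_const.div (hk.continuousOn.mono hsub)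
      fun t ht => (hkpos t (hsub ht)).ne')
  obtain ⟨m, hm, hmk⟩ := isCompact_Icc.exists_forall_le' h_cont (a := 0) fun t ht =>
    sub_pos.2 ((div_lt_iff₀ (hkpos t (hsub ht))).2 (hK t ht))
  filter_upwards [eventually_isStatSol, eventually_mul_fst_lt ((1 - u - u) / (c - a)) hm]
    with s ⟨hε, hs⟩ hslope hJ hua
  refine le_of_slope_lt hac (by linarith)
    (f := fun t v => (v * (1 - v) - inflow k α s.2 / k t) / s.1)
    (fun t ht => hs.hasDerivWithinAt hk hkpos hε ha hc ht) (fun t ht v hv => ?_) hua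
  have h_flux : inflow k α s.2 / k t ≤ K / k t :=
    div_le_div_of_nonneg_right hJ (hkpos t (hsub ht)).le
  rw [lt_div_iff₀ hε]
  linarith [hmk t ht, mul_one_sub_le_of_mem_Icc hv]

lemma eventually_le_zero (hk : DifferentiableOn ℝ k (Icc 0 1))
    (hkpos : ∀ t ∈ Icc (0 : ℝ) 1, 0 < k t) (ha : 0 ≤ a) (hac : a < c) (hc : c ≤ 1)
    (hu₀ : 0 ≤ u) (hu : u ≤ 1 / 2) (hK : ∀ t ∈ Icc a c, u * (1 - u) * k t < K) :
    ∀ᶠ s in vanishingViscosity k α β, K ≤ inflow k α s.2 → s.2 a ≤ u → s.2 c ≤ 0 := by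
  have hsub : Icc a c ⊆ Icc 0 1 := Icc_subset_Icc ha hc
  have h_cont : ContinuousOn (fun t => K / k t - u * (1 - u)) (Icc a c) :=
    (continuousOn_const.div (hk.continuousOn.mono hsub)
      fun t ht => (hkpos t (hsub ht)).ne').sub continuousOn_const
  obtain ⟨m, hm, hmk⟩ := isCompact_Icc.exists_forall_le' h_cont (a := 0) fun t ht =>
    sub_pos.2 ((lt_div_iff₀ (hkpos t (hsub ht))).2 (hK t ht))
  filter_upwards [eventually_isStatSol, eventually_mul_fst_lt ((u - 0) / (c - a)) hm]
    with s ⟨hε, hs⟩ hslope hJ hua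
  refine le_of_lt_neg_slope hac hu₀
    (f := fun t v => (v * (1 - v) - inflow k α s.2 / k t) / s.1)
    (fun t ht => hs.hasDerivWithinAt hk hkpos hε ha hc ht) (fun t ht v hv => ?_) hua
  have h_flux : K / k t ≤ inflow k α s.2 / k t :=
    div_le_div_of_nonneg_right hJ (hkpos t (hsub ht)).le
  have h_mono : v * (1 - v) ≤ u * (1 - u) :=
    strictMonoOn_mul_one_sub.monotoneOn (hv.2.trans hu) hu hv.2
  rw [div_lt_iff₀ hε]
  linarith [hmk t ht]

end Barriers

section Positivity

variable {ε : ℝ} {ρ : ℝ → ℝ}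

lemma IsStatSol.inflow_pos (h : IsStatSol k ε α β ρ) (hk : DifferentiableOn ℝ k (Icc 0 1))
    (hkpos : ∀ t ∈ Icc (0 : ℝ) 1, 0 < k t) (hε : 0 < ε) (hα : 0 < α) (hβ : 0 < β) :
    0 < inflow k α ρ := by
  by_contra! hJ
  have h_start : 1 ≤ ρ 0 := by
    have : α * (1 - ρ 0) ≤ 0 := nonpos_of_mul_nonpos_right hJ (hkpos 0 (by simp))
    linarith [nonpos_of_mul_nonpos_right this hα]
  have h_end : ρ 1 ≤ 0 := by
    rw [h.inflow_eq_outflow hk] at hJ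
    exact nonpos_of_mul_nonpos_right (nonpos_of_mul_nonpos_right hJ (hkpos 1 (by simp))) hβ
  have h_stay : 1 / 2 ≤ ρ 1 := by
    refine le_of_slope_lt zero_lt_one le_rfl
      (f := fun t v => (v * (1 - v) - inflow k α ρ / k t) / ε)
      (fun t ht => h.hasDerivWithinAt hk hkpos hε le_rfl le_rfl ht) (fun t ht v hv => ?_)
      (by linarith)
    obtain rfl : v = 1 / 2 := le_antisymm hv.2 hv.1
    have : inflow k α ρ / k t ≤ 0 := div_nonpos_of_nonpos_of_nonneg hJ (hkpos t ht).le
    simp only [sub_self, zero_div]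
    exact div_pos (by linarith) hε
  linarith

lemma IsStatSol.pos (h : IsStatSol k ε α β ρ) (hk : DifferentiableOn ℝ k (Icc 0 1))
    (hkpos : ∀ t ∈ Icc (0 : ℝ) 1, 0 < k t) (hε : 0 < ε) (hα : 0 < α) (hβ : 0 < β)
    {x : ℝ} (hx : x ∈ Icc (0 : ℝ) 1) : 0 < ρ x := by
  have hJ := h.inflow_pos hk hkpos hε hα hβ
  have h_end : 0 < ρ 1 := by
    rw [h.inflow_eq_outflow hk] at hJ
    exact pos_of_mul_pos_right (pos_of_mul_pos_right hJ (hkpos 1 (by simp)).le) hβ.le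
  obtain rfl | hx1 := hx.2.eq_or_lt
  · exact h_end
  by_contra! hρx
  refine h_end.not_ge (le_of_lt_neg_slope hx1 le_rfl
    (f := fun t v => (v * (1 - v) - inflow k α ρ / k t) / ε)
    (fun t ht => h.hasDerivWithinAt hk hkpos hε hx.1 le_rfl ht) (fun t ht v hv => ?_) hρx)
  obtain rfl : v = 0 := le_antisymm hv.2 hv.1
  have : 0 < inflow k α ρ / k t := div_pos hJ (hkpos t ⟨hx.1.trans ht.1, ht.2⟩)
  simp only [sub_self, zero_div, neg_zero]
  exact div_neg_of_neg_of_pos (by linarith) hε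

end Positivity

section PointwiseBounds

variable {J K u x : ℝ}

lemma IsSubcritical.mono (h : IsSubcritical k β J) (hKJ : K ≤ J) : IsSubcritical k β K :=
  ⟨fun t ht => hKJ.trans_lt (h.lt_bulk t ht), hKJ.trans_lt h.lt_exit⟩

lemma IsSubcritical.exists_gt (h : IsSubcritical k β J) (hk : ContinuousOn k (Icc 0 1)) :
    ∃ K > J, IsSubcritical k β K := by
  obtain ⟨B, hJB, hB⟩ := isCompact_Icc.exists_forall_le' (hk.div_const 4) h.lt_bulk
  obtain ⟨K, hJK, hK⟩ := exists_between (lt_min hJB h.lt_exit)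
  obtain ⟨hKB, hKE⟩ := lt_min_iff.1 hK
  exact ⟨K, hJK, fun t ht => hKB.trans_le (hB t ht), hKE⟩

lemma eventually_lt_of_inflow_le (hk : DifferentiableOn ℝ k (Icc 0 1))
    (hkpos : ∀ t ∈ Icc (0 : ℝ) 1, 0 < k t) (hβ : 0 < β) (hK : IsSubcritical k β K)
    (hx : x ∈ Ico (0 : ℝ) 1) (hu : u ≤ 1 / 2) (hKu : K < u * (1 - u) * k x) :
    ∀ᶠ s in vanishingViscosity k α β, inflow k α s.2 ≤ K → s.2 x < u := by
  set b := min β (1 / 2)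
  have hb : b ≤ 1 / 2 := min_le_right _ _
  have hb₀ : 0 < b := lt_min hβ one_half_pos
  have h_cont (w : ℝ) : ContinuousOn (fun t => w * (1 - w) * k t) (Icc 0 1) :=
    continuousOn_const.mul hk.continuousOn
  obtain ⟨c, hc, hKc⟩ := exists_forall_Icc_right hx
    ((h_cont u x ⟨hx.1, hx.2.le⟩).eventually_const_lt hKu)
  have hc₀ : 0 ≤ c := hx.1.trans hc.1.le
  obtain ⟨d, hd, hKd⟩ := exists_forall_Icc_left (a := c) ⟨hc.2, le_rfl⟩
    (((h_cont b).mono (Icc_subset_Icc_left hc₀) 1 ⟨hc.2.le, le_rfl⟩).eventually_const_lt hK.lt_exit)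
  filter_upwards [eventually_isStatSol,
    eventually_one_sub_le hk hkpos hx.1 hc.1 hc.2.le hu hKc,
    eventually_one_sub_le hk hkpos (u := 1 / 2) hc₀ hd.1 hd.2.le le_rfl
      (fun t ht => (hK.lt_bulk t ⟨hc₀.trans ht.1, ht.2.trans hd.2.le⟩).trans_eq (by ring)),
    eventually_one_sub_le hk hkpos (hc₀.trans hd.1.le) hd.2 le_rfl hb hKd]
    with s ⟨_, hs⟩ h_rise h_stay h_exit hJ
  by_contra! hux
  have hρc : 1 / 2 ≤ s.2 c := by linarith [h_rise hJ hux]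
  have hρd : 1 / 2 ≤ s.2 d := by linarith [h_stay hJ hρc]
  have hρ1 : 1 - b ≤ s.2 1 := h_exit hJ (hb.trans hρd)
  have h_out : b * (1 - b) ≤ β * s.2 1 :=
    mul_le_mul (min_le_left _ _) hρ1 (by linarith) hβ.le
  have h_over : b * (1 - b) * k 1 ≤ inflow k α s.2 := by
    rw [hs.inflow_eq_outflow hk, mul_comm (k 1)]
    exact mul_le_mul_of_nonneg_right h_out (hkpos 1 (by simp)).le
  linarith [hK.lt_exit]

lemma eventually_gt_of_le_inflow (hk : DifferentiableOn ℝ k (Icc 0 1))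
    (hkpos : ∀ t ∈ Icc (0 : ℝ) 1, 0 < k t) (hα : 0 < α) (hβ : 0 < β)
    (hx : x ∈ Ico (0 : ℝ) 1) (hu : u ≤ 1 / 2) (hKu : u * (1 - u) * k x < K) :
    ∀ᶠ s in vanishingViscosity k α β, K ≤ inflow k α s.2 → u < s.2 x := by
  obtain hu₀ | hu₀ := lt_or_ge u 0
  · filter_upwards [eventually_isStatSol] with s ⟨hε, hs⟩ _
    exact hu₀.trans (hs.pos hk hkpos hε hα hβ ⟨hx.1, hx.2.le⟩)
  have h_cont : ContinuousOn (fun t => u * (1 - u) * k t) (Icc 0 1) :=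
    continuousOn_const.mul hk.continuousOn
  obtain ⟨c, hc, hKc⟩ := exists_forall_Icc_right hx
    ((h_cont x ⟨hx.1, hx.2.le⟩).eventually_lt_const hKu)
  filter_upwards [eventually_isStatSol,
    eventually_le_zero hk hkpos hx.1 hc.1 hc.2.le hu₀ hu hKc] with s ⟨hε, hs⟩ h_drop hJ
  by_contra! hxu
  exact (h_drop hJ hxu).not_gt
    (hs.pos hk hkpos hε hα hβ ⟨hx.1.trans hc.1.le, hc.2.le⟩)

end PointwiseBounds

section Limits

theorem tendsto_inflow (hk : DifferentiableOn ℝ k (Icc 0 1))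
    (hkpos : ∀ t ∈ Icc (0 : ℝ) 1, 0 < k t) (hα : 0 < α) (hα' : α ≤ 1 / 2) (hβ : 0 < β)
    (hJ : IsSubcritical k β (α * (1 - α) * k 0)) :
    Tendsto (fun s => inflow k α s.2) (vanishingViscosity k α β) (𝓝 (α * (1 - α) * k 0)) := by
  have hkα : 0 < k 0 * α := mul_pos (hkpos 0 (by simp)) hα
  refine tendsto_order.2 ⟨fun K hK => ?_, fun K hK => ?_⟩
  · filter_upwards [eventually_lt_of_inflow_le hk hkpos hβ (hJ.mono hK.le) (left_mem_Ico.2 one_pos)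
      hα' hK] with s h_lt
    by_contra! hJK
    have : 0 < k 0 * α * (α - s.2 0) := mul_pos hkα (sub_pos.2 (h_lt hJK))
    linarith [inflow_eq k α s.2]
  · filter_upwards [eventually_gt_of_le_inflow hk hkpos hα hβ (left_mem_Ico.2 one_pos) hα' hK]
      with s h_gt
    by_contra! hJK
    have : 0 < k 0 * α * (s.2 0 - α) := mul_pos hkα (sub_pos.2 (h_gt hJK))
    linarith [inflow_eq k α s.2]

variable {J : ℝ}

theorem tendsto_entrance (hk₀ : k 0 ≠ 0) (hα : α ≠ 0)
    (h : Tendsto (fun s => inflow k α s.2) (vanishingViscosity k α β) (𝓝 (α * (1 - α) * k 0))) :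
    Tendsto (fun s => s.2 0) (vanishingViscosity k α β) (𝓝 α) := by
  have h_lim := (h.div_const (k 0 * α)).const_sub 1
  have h_val : 1 - α * (1 - α) * k 0 / (k 0 * α) = α := by field_simp; ring
  rw [h_val] at h_lim
  refine h_lim.congr fun s => ?_
  rw [inflow]
  field_simp
  ring

theorem tendsto_exit (hk : DifferentiableOn ℝ k (Icc 0 1)) (hk₁ : k 1 ≠ 0) (hβ : β ≠ 0)
    (h : Tendsto (fun s => inflow k α s.2) (vanishingViscosity k α β) (𝓝 J)) :
    Tendsto (fun s => s.2 1) (vanishingViscosity k α β) (𝓝 (J / (β * k 1))) := by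
  refine (h.div_const (β * k 1)).congr' ?_
  filter_upwards [eventually_isStatSol] with s ⟨_, hs⟩
  rw [hs.inflow_eq_outflow hk]
  field_simp

theorem tendsto_lowDensity (hk : DifferentiableOn ℝ k (Icc 0 1))
    (hkpos : ∀ t ∈ Icc (0 : ℝ) 1, 0 < k t) (hα : 0 < α) (hβ : 0 < β) (hJ : IsSubcritical k β J)
    (h : Tendsto (fun s => inflow k α s.2) (vanishingViscosity k α β) (𝓝 J))
    {x : ℝ} (hx : x ∈ Ico (0 : ℝ) 1) :
    Tendsto (fun s => s.2 x) (vanishingViscosity k α β) (𝓝 (lowDensity (J / k x))) := by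
  have hxI : x ∈ Icc (0 : ℝ) 1 := ⟨hx.1, hx.2.le⟩
  have hkx := hkpos x hxI
  have hq : J / k x < 1 / 4 := by
    rw [div_lt_iff₀ hkx]
    linarith [hJ.lt_bulk x hxI]
  refine tendsto_order.2 ⟨fun u hu => ?_, fun v hv => ?_⟩
  · have hu' : u ≤ 1 / 2 := hu.le.trans (lowDensity_le_half _)
    have huJ : u * (1 - u) * k x < J :=
      (lt_div_iff₀ hkx).1 ((lt_lowDensity_iff hq.le hu').1 hu)
    obtain ⟨K, hKu, hKJ⟩ := exists_between huJ
    filter_upwards [eventually_gt_of_le_inflow hk hkpos hα hβ hx hu' hKu,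
      h.eventually_const_lt hKJ] with s h_gt hs
    exact h_gt hs.le
  · obtain ⟨u, hu, huv⟩ := exists_between (lt_min hv (lowDensity_lt_half hq))
    obtain ⟨huv, hu'⟩ := lt_min_iff.1 huv
    have hJu : J < u * (1 - u) * k x :=
      (div_lt_iff₀ hkx).1 ((lowDensity_lt_iff hq.le hu'.le).1 hu)
    obtain ⟨L, hJL, hL⟩ := hJ.exists_gt hk.continuousOn
    obtain ⟨K, hJK, hK⟩ := exists_between (lt_min hJL hJu)
    obtain ⟨hKL, hKu⟩ := lt_min_iff.1 hK
    filter_upwards [eventually_lt_of_inflow_le hk hkpos hβ (hL.mono hKL.le) hx hu'.le hKu,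
      h.eventually_lt_const hJK] with s h_lt hs
    exact (h_lt hs.le).trans huv

end Limits

section ParameterRegion

variable {ξs : ℝ}

lemma half_mul_one_sub_sqrt_eq_lowDensity (k : ℝ → ℝ) (α x : ℝ) :
    1/2 * (1 - Real.sqrt (1 - 4*α*(1-α) * k 0 / k x)) = lowDensity (α * (1 - α) * k 0 / k x) := by
  rw [lowDensity]
  ring_nf

lemma rhoStar_eq_lowDensity (k : ℝ → ℝ) (α : ℝ) :
    rhoStar k α = lowDensity (α * (1 - α) * k 0 / k 1) :=
  half_mul_one_sub_sqrt_eq_lowDensity k α 1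

lemma rhoC0_eq_lowDensity (k : ℝ → ℝ) (ξs : ℝ) : rhoC0 k ξs = lowDensity (k ξs / 4 / k 0) := by
  rw [rhoC0, lowDensity]
  ring_nf

lemma lt_half_of_lt_rhoC0 (hα : α < rhoC0 k ξs) : α < 1 / 2 :=
  hα.trans_le (rhoC0_eq_lowDensity k ξs ▸ lowDensity_le_half _)

lemma rhoStar_pos (hk₀ : 0 < k 0) (hk₁ : 0 < k 1) (hα₀ : 0 < α) (hα₁ : α < 1) :
    0 < rhoStar k α := by
  rw [rhoStar_eq_lowDensity]
  exact lowDensity_pos (div_pos (mul_pos (mul_pos hα₀ (sub_pos.2 hα₁)) hk₀) hk₁)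

lemma mul_lt_of_lt_rhoC0 (hk₀ : 0 < k 0) (hξs : k ξs ≤ k 0) (hα : α < rhoC0 k ξs) :
    α * (1 - α) * k 0 < k ξs / 4 := by
  have hα' : α ≤ 1 / 2 := (lt_half_of_lt_rhoC0 hα).le
  rw [rhoC0_eq_lowDensity] at hα
  exact (lt_div_iff₀ hk₀).1
    ((lt_lowDensity_iff ((div_le_iff₀ hk₀).2 (by linarith)) hα').1 hα)

lemma isSubcritical_of_lt_rhoC0 (hkpos : ∀ t ∈ Icc (0 : ℝ) 1, 0 < k t)
    (hmin : IsMinOn k (Icc 0 1) ξs) (hα : α < rhoC0 k ξs) (hβ : rhoStar k α < β) :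
    IsSubcritical k β (α * (1 - α) * k 0) := by
  have h_min (t : ℝ) (ht : t ∈ Icc (0 : ℝ) 1) : k ξs ≤ k t := hmin ht
  have h_bulk (t : ℝ) (ht : t ∈ Icc (0 : ℝ) 1) : α * (1 - α) * k 0 < k t / 4 := by
    linarith [mul_lt_of_lt_rhoC0 (hkpos 0 (by simp)) (h_min 0 (by simp)) hα, h_min t ht]
  have hk₁ : 0 < k 1 := hkpos 1 (by simp)
  have hq : α * (1 - α) * k 0 / k 1 < 1 / 4 := by
    rw [div_lt_iff₀ hk₁]
    linarith [h_bulk 1 (by simp)]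
  refine ⟨h_bulk, (div_lt_iff₀ hk₁).1 ((lowDensity_lt_iff hq.le (min_le_right _ _)).1 ?_)⟩
  exact lt_min (rhoStar_eq_lowDensity k α ▸ hβ) (lowDensity_lt_half hq)

end ParameterRegion

theorem bvp_low_density_profile_general
    (k : ℝ → ℝ) (ξs : ℝ)
    (hk : DifferentiableOn ℝ k (Icc 0 1))
    (hkpos : ∀ x ∈ Icc (0 : ℝ) 1, 0 < k x)
    (hmin : IsMinOn k (Icc 0 1) ξs)
    (α β : ℝ)
    (hα0 : 0 < α) (hα : α < rhoC0 k ξs) (hβ1 : rhoStar k α < β) :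
    ∀ δ > 0, ∀ x ∈ Ioo (0 : ℝ) 1, ∃ ε₀ > 0, ∀ ε : ℝ, 0 < ε → ε < ε₀ →
      ∀ ρ : ℝ → ℝ, IsStatSol k ε α β ρ →
        |ρ 0 - α| < δ ∧
        |ρ x - 1/2 * (1 - Real.sqrt (1 - 4*α*(1-α) * k 0 / k x))| < δ ∧
        |ρ 1 - α*(1-α) * k 0 / (β * k 1)| < δ := by
  intro δ hδ x hx
  have hk₀ : 0 < k 0 := hkpos 0 (by simp)
  have hk₁ : 0 < k 1 := hkpos 1 (by simp)
  have hα' : α < 1 / 2 := lt_half_of_lt_rhoC0 hα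
  have hβ : 0 < β := (rhoStar_pos hk₀ hk₁ hα0 (by linarith)).trans hβ1
  have h_sub := isSubcritical_of_lt_rhoC0 hkpos hmin hα hβ1
  have h_inflow := tendsto_inflow hk hkpos hα0 hα'.le hβ h_sub
  have h_entrance := tendsto_entrance hk₀.ne' hα0.ne' h_inflow
  have h_bulk := tendsto_lowDensity hk hkpos hα0 hβ h_sub h_inflow ⟨hx.1.le, hx.2⟩
  have h_exit := tendsto_exit hk hk₁.ne' hβ.ne' h_inflow
  rw [half_mul_one_sub_sqrt_eq_lowDensity]
  exact eventually_vanishingViscosity_iff.1 <|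
    (Metric.tendsto_nhds.1 h_entrance δ hδ).and <|
      (Metric.tendsto_nhds.1 h_bulk δ hδ).and (Metric.tendsto_nhds.1 h_exit δ hδ)

/-- In the low-density regions `G_1 ∪ G_2`
(`0 < α < ρ_c^0`, `ρ*(α) < β < 1`, `β ≠ 1 - ρ*(α)`), as `ε → 0` the solutions of the
stationary boundary value problem converge to the low-density reduced orbit starting at
`ρ = α`: `ρ(0) → α`, `ρ(x) → (1/2)(1 - √(1 - 4α(1-α)k(0)/k(x)))` at interior points `x`,
and `ρ(1) → α(1-α)k(0)/(βk(1))` (boundary layer only at the exit). -/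
theorem bvp_low_density_profile
    (k : ℝ → ℝ) (ξs : ℝ)
    (hk : ContDiff ℝ 2 k)
    (hkpos : ∀ x ∈ Icc (0:ℝ) 1, 0 < k x)
    (hξs : ξs ∈ Ioo (0:ℝ) 1)
    (hmin : ∀ x ∈ Icc (0:ℝ) 1, x ≠ ξs → k ξs < k x)
    (hk's : deriv k ξs = 0)
    (hk''s : 0 < deriv (deriv k) ξs)
    (α β : ℝ)
    (hα0 : 0 < α) (hα : α < rhoC0 k ξs)
    (hβ1 : rhoStar k α < β) (hβ2 : β < 1) (hβ3 : β ≠ 1 - rhoStar k α) :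
    ∀ δ > 0, ∀ x ∈ Ioo (0:ℝ) 1, ∃ ε₀ > 0, ∀ ε : ℝ, 0 < ε → ε < ε₀ →
      ∀ ρ : ℝ → ℝ, IsStatSol k ε α β ρ →
        |ρ 0 - α| < δ ∧
        |ρ x - 1/2 * (1 - Real.sqrt (1 - 4*α*(1-α) * k 0 / k x))| < δ ∧
        |ρ 1 - α*(1-α) * k 0 / (β * k 1)| < δ := by
  have h_min : IsMinOn k (Icc 0 1) ξs := fun x hx =>
    (eq_or_ne x ξs).elim (fun h => (congrArg k h).ge) fun h => (hmin x hx h).le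
  exact bvp_low_density_profile_general k ξs (hk.differentiable two_ne_zero).differentiableOn
    hkpos h_min α β hα0 hα hβ1
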